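/- arXiv:2106.05475 — 2 statements merged into one kernel-verified Lean document; each statement's English description precedes it below -/
import Mathlib

section
/- Fix N ≥ 1 and parameters τ : Fin N → ℝ, p : Fin N → ℝ with p_i > 0, η : Fin N → ℝ with η_i > 0, α : Fin N → ℝ with α_i > 0, D ≥ 0, and M ∈ ℝ. Suppose (T, n, k, c, x, t, y) with c, x, y : Fin N → ℕ binary-valued, t : Fin N → ℝ, and integers n, k satisfies: ∑_i c_i = n, x_i ≤ c_i for all i, ∑_i x_i = k, ∑_{j=1}^{N} j·y_j = k, ∑_{j=1}^{N} y_j = 1, t_i + (1−x_i)·M ≥ 2τ_i/p_i + ∑_{j=1}^{N} y_j·(D/(j·η_i) + D/(j·η_i·α_i)) for all i, T ≥ ∑_i t_i, 1 ≤ k ≤ n ≤ N. Then (T, n, k, c, x, t) satisfies the nonlinear constraint t_i + (1−x_i)·M ≥ 2τ_i/p_i + D/(k·η_i) + D/(k·η_i·α_i) for all i (together with all shared constraints), i.e., it is feasible for P1 with the same objective value T. -/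
/-!
The constraint `∑ j, y j = 1` over the naturals forces `y` to be the indicator of one index `j₀`,
and `∑ j, (j + 1) * y j = k` then gives `k = j₀ + 1`. Hence the linearized sum collapses to its
`j₀` term, which is exactly the nonlinear expression `D / (k η_i) + D / (k η_i α_i)`.
-/

open Finset

/-- Feasibility of the paper's MINLP `P1`: node-selection variables `c, x` are binary,
`∑ i c_i = n`, `x_i ≤ c_i`, `∑ i x_i = k`, the nonlinear big-M constraint (5)
`t_i + (1−x_i)·M ≥ 2τ_i/p_i + D/(k·η_i) + D/(k·η_i·α_i)`, `T ≥ ∑ i t_i`,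
and `1 ≤ k ≤ n ≤ N`. -/
def P1Feasible (N : ℕ) (τ p η α : Fin N → ℝ) (D M : ℝ)
    (T : ℝ) (n k : ℕ) (c x : Fin N → ℕ) (t : Fin N → ℝ) : Prop :=
  (∀ i, c i = 0 ∨ c i = 1) ∧ (∀ i, x i = 0 ∨ x i = 1) ∧
  (∑ i : Fin N, c i = n) ∧ (∀ i, x i ≤ c i) ∧ (∑ i : Fin N, x i = k) ∧
  (∀ i, t i + (1 - (x i : ℝ)) * M ≥
      2 * τ i / p i + D / (k * η i) + D / (k * η i * α i)) ∧
  (T ≥ ∑ i : Fin N, t i) ∧ 1 ≤ k ∧ k ≤ n ∧ n ≤ N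

/-- Feasibility of the linearized MILP `P2`: the shared constraints of `P1`, the extra
binary variables `y` with `∑_j j·y_j = k` and `∑_j y_j = 1` (with `j : Fin N`
representing the 1-based index `(j : ℕ) + 1`), and the linearized constraint (16)
`t_i + (1−x_i)·M ≥ 2τ_i/p_i + ∑_j y_j·(D/(j·η_i) + D/(j·η_i·α_i))`. -/
def P2Feasible (N : ℕ) (τ p η α : Fin N → ℝ) (D M : ℝ)
    (T : ℝ) (n k : ℕ) (c x y : Fin N → ℕ) (t : Fin N → ℝ) : Prop :=
  (∀ i, c i = 0 ∨ c i = 1) ∧ (∀ i, x i = 0 ∨ x i = 1) ∧ (∀ j, y j = 0 ∨ y j = 1) ∧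
  (∑ i : Fin N, c i = n) ∧ (∀ i, x i ≤ c i) ∧ (∑ i : Fin N, x i = k) ∧
  (∑ j : Fin N, ((j : ℕ) + 1) * y j = k) ∧ (∑ j : Fin N, y j = 1) ∧
  (∀ i, t i + (1 - (x i : ℝ)) * M ≥
      2 * τ i / p i + ∑ j : Fin N, (y j : ℝ) *
        (D / (((j : ℕ) + 1) * η i) + D / (((j : ℕ) + 1) * η i * α i))) ∧
  (T ≥ ∑ i : Fin N, t i) ∧ 1 ≤ k ∧ k ≤ n ∧ n ≤ N

/-- A natural-number-valued family with sum `1` is the indicator of a single index. -/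
theorem exists_unique_index {N : ℕ} (y : Fin N → ℕ) (h : ∑ j : Fin N, y j = 1) :
    ∃ j₀, y j₀ = 1 ∧ ∀ j, j ≠ j₀ → y j = 0 := by
  obtain ⟨j₀, -, hne⟩ := Finset.exists_ne_zero_of_sum_ne_zero (h.trans_ne one_ne_zero)
  have hsplit := Finset.add_sum_erase Finset.univ y (Finset.mem_univ j₀)
  refine ⟨j₀, by omega, fun j hj => ?_⟩
  have hle := Finset.single_le_sum (f := y) (fun _ _ => Nat.zero_le _)
    (Finset.mem_erase.2 ⟨hj, Finset.mem_univ j⟩)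
  omega

/-- Proposition 2, second direction: every feasible point of `P2` projects (by
dropping `y`) to a feasible point of `P1` with the same objective value `T`. -/
theorem P2_feasible_projects_to_P1 (N : ℕ) (hN : 1 ≤ N)
    (τ p η α : Fin N → ℝ) (hp : ∀ i, 0 < p i) (hη : ∀ i, 0 < η i)
    (hα : ∀ i, 0 < α i) (D : ℝ) (hD : 0 ≤ D) (M : ℝ)
    (T : ℝ) (n k : ℕ) (c x y : Fin N → ℕ) (t : Fin N → ℝ)
    (h2 : P2Feasible N τ p η α D M T n k c x y t) :
    P1Feasible N τ p η α D M T n k c x t := by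
  obtain ⟨hc, hx, hy, hcn, hxc, hxk, hyk, hy1, hcon, hT, hk, hkn, hnN⟩ := h2
  obtain ⟨j₀, hj₀, hother⟩ := exists_unique_index y hy1
  have hkj : (k : ℝ) = ((j₀ : ℕ) : ℝ) + 1 := by
    rw [Finset.sum_eq_single j₀ (fun j _ hj => by rw [hother j hj, mul_zero])
      (fun h => absurd (Finset.mem_univ _) h), hj₀, mul_one] at hyk
    exact_mod_cast hyk.symm
  refine ⟨hc, hx, hcn, hxc, hxk, fun i => ?_, hT, hk, hkn, hnN⟩
  have h := hcon i
  rw [Finset.sum_eq_single j₀ (fun j _ hj => by rw [hother j hj, Nat.cast_zero, zero_mul])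
    (fun h => absurd (Finset.mem_univ _) h), hj₀, Nat.cast_one, one_mul, ← hkj] at h
  linarith
end

section
/- Fix N ≥ 1 and parameters τ : Fin N → ℝ, p : Fin N → ℝ with p_i > 0, η : Fin N → ℝ with η_i > 0, α : Fin N → ℝ with α_i > 0, D ≥ 0, and M ∈ ℝ. Let S₁ ⊆ ℝ be the set of objective values T attained by feasible points of P1 and S₂ ⊆ ℝ the set of objective values T attained by feasible points of P2. Then S₁ = S₂; in particular P1 and P2 have the same infimum of T, so the linearized problem P2 is equivalent to the original problem P1 (Proposition 2). -/
/-!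
The constraint `∑ j, y j = 1` forces `y` to be the indicator of one index `j`, and then
`∑ j, (j + 1) * y j = k` says `j + 1 = k`. Hence the sum in the linearized constraint
collapses to its `j = k - 1` term, which is the nonlinear expression of `P1`. Conversely
`1 ≤ k ≤ N` lets the indicator of `k - 1` serve as `y`. So, for fixed remaining variables,
feasibility for `P1` amounts to the existence of a `y` feasible for `P2`.
-/

open Finset

/-- A natural-valued family with sum `1` is the indicator of a single index. -/
theorem eq_single_of_sum_eq_one {N : ℕ} (y : Fin N → ℕ) (h : ∑ j, y j = 1) :
    ∃ j, y = Pi.single j 1 := by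
  have hne : ∃ j, y j ≠ 0 := by
    by_contra! h0
    simp [h0] at h
  obtain ⟨j, hj⟩ := hne
  have hs := Finset.add_sum_erase univ y (mem_univ j)
  have hrest : ∑ i ∈ univ.erase j, y i = 0 := by omega
  refine ⟨j, funext fun i => ?_⟩
  rcases eq_or_ne i j with rfl | hij
  · rw [Pi.single_eq_same]
    omega
  · rw [Pi.single_eq_of_ne hij]
    exact Finset.sum_eq_zero_iff.mp hrest i (by simp [hij])

theorem sum_single_mul {N : ℕ} (j : Fin N) (f : Fin N → ℝ) :
    ∑ i, ((Pi.single j 1 : Fin N → ℕ) i : ℝ) * f i = f j := by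
  simp [Pi.single_apply]

theorem P1Feasible_iff_exists_P2Feasible (N : ℕ) (τ p η α : Fin N → ℝ) (D M T : ℝ)
    (n k : ℕ) (c x : Fin N → ℕ) (t : Fin N → ℝ) :
    P1Feasible N τ p η α D M T n k c x t ↔
      ∃ y, P2Feasible N τ p η α D M T n k c x y t := by
  constructor
  · rintro ⟨h1, h2, h3, h4, h5, h6, h7, h8, h9, h10⟩
    -- The bounds `1 ≤ k ≤ N` make `k - 1` a valid zero-based index.
    obtain ⟨m, rfl⟩ : ∃ m, k = m + 1 := ⟨k - 1, by omega⟩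
    let j : Fin N := ⟨m, by omega⟩
    refine ⟨Pi.single j 1, h1, h2, fun i => ?_, h3, h4, h5, ?_, ?_, fun i => ?_,
      h7, h8, h9, h10⟩
    · by_cases hij : i = j <;> simp [Pi.single_apply, hij]
    · simp [Pi.single_apply, j]
    · simp
    · rw [sum_single_mul]
      have := h6 i
      push_cast at this
      simp only [j]
      linarith
  · rintro ⟨y, h1, h2, -, h3, h4, h5, hk, hy, h6, h7, h8, h9, h10⟩
    obtain ⟨j, rfl⟩ := eq_single_of_sum_eq_one y hy
    have hjk : (j : ℕ) + 1 = k := by simpa [Pi.single_apply] using hk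
    refine ⟨h1, h2, h3, h4, h5, fun i => ?_, h7, h8, h9, h10⟩
    have := h6 i
    rw [sum_single_mul] at this
    rw [← hjk]
    push_cast
    linarith

/-- Proposition 2: the set of objective values attained by feasible points of the
MINLP `P1` equals the set of objective values attained by feasible points of the
linearized MILP `P2`; in particular the two problems have the same infimum of `T`,
i.e. `P2` is equivalent to `P1`. -/
theorem P1_equivalent_P2 (N : ℕ) (hN : 1 ≤ N)
    (τ p η α : Fin N → ℝ) (hp : ∀ i, 0 < p i) (hη : ∀ i, 0 < η i)
    (hα : ∀ i, 0 < α i) (D : ℝ) (hD : 0 ≤ D) (M : ℝ) :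
    ({T : ℝ | ∃ (n k : ℕ) (c x : Fin N → ℕ) (t : Fin N → ℝ),
        P1Feasible N τ p η α D M T n k c x t}
      = {T : ℝ | ∃ (n k : ℕ) (c x y : Fin N → ℕ) (t : Fin N → ℝ),
        P2Feasible N τ p η α D M T n k c x y t})
    ∧ sInf {T : ℝ | ∃ (n k : ℕ) (c x : Fin N → ℕ) (t : Fin N → ℝ),
        P1Feasible N τ p η α D M T n k c x t}
      = sInf {T : ℝ | ∃ (n k : ℕ) (c x y : Fin N → ℕ) (t : Fin N → ℝ),
        P2Feasible N τ p η α D M T n k c x y t} := by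
  have h : {T : ℝ | ∃ (n k : ℕ) (c x : Fin N → ℕ) (t : Fin N → ℝ),
        P1Feasible N τ p η α D M T n k c x t}
      = {T : ℝ | ∃ (n k : ℕ) (c x y : Fin N → ℕ) (t : Fin N → ℝ),
        P2Feasible N τ p η α D M T n k c x y t} := by
    ext T
    constructor
    · rintro ⟨n, k, c, x, t, ht⟩
      obtain ⟨y, hy⟩ := (P1Feasible_iff_exists_P2Feasible ..).mp ht
      exact ⟨n, k, c, x, y, t, hy⟩
    · rintro ⟨n, k, c, x, y, t, hy⟩
      exact ⟨n, k, c, x, t, (P1Feasible_iff_exists_P2Feasible ..).mpr ⟨y, hy⟩⟩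
  exact ⟨h, congrArg sInf h⟩
end
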